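/- Let η ≥ 1 be an integer and let G be a finite simple graph containing a clique J with |J| = η + 1 and a vertex u ∈ J such that no vertex of J ∖ {u} has a neighbor outside J. Then: (i) every η-treedepth deletion set of G contains at least one vertex of J; and (ii) every connected η-treedepth deletion set S of G that is not contained in J satisfies u ∈ S. -/

import Mathlib

open SimpleGraph Set

variable {V : Type*}

/-- The connected component of `x` inside the induced subgraph `G[S]`, as a subset of `V`. -/
def compIn (G : SimpleGraph V) (S : Set V) (x : V) : Set V :=
  {y | ∃ (hx : x ∈ S) (hy : y ∈ S), (G.induce S).Reachable ⟨x, hx⟩ ⟨y, hy⟩}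

/-- `tdLE G n S` means that the treedepth of the induced subgraph `G[S]` is at most `n`,
following the recursive definition of treedepth: a graph has treedepth at most `n+1`
iff from every connected component one can delete a vertex leaving a graph of
treedepth at most `n`; only the empty graph has treedepth at most `0`. -/
def tdLE (G : SimpleGraph V) : ℕ → Set V → Prop
  | 0, S => S = ∅
  | n+1, S => ∀ x ∈ S, ∃ v ∈ compIn G S x, tdLE G n (compIn G S x \ {v})

/-- The treedepth of the induced subgraph `G[S]`. -/
noncomputable def td (G : SimpleGraph V) (S : Set V) : ℕ :=
  sInf {n | tdLE G n S}

/-- `N_G(C)`: the set of vertices outside `C` having a neighbor in `C`. -/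
def nbhd (G : SimpleGraph V) (C : Set V) : Set V :=
  {v | v ∉ C ∧ ∃ u ∈ C, G.Adj u v}

/-- `C` is a connected component of the induced subgraph `G[R]`. -/
def IsCompOf (G : SimpleGraph V) (R C : Set V) : Prop :=
  ∃ x ∈ R, C = compIn G R x

/-- `S` is an `η`-treedepth deletion set of `G`: `td(G − S) ≤ η`. -/
def IsTDS (G : SimpleGraph V) (η : ℕ) (S : Set V) : Prop :=
  td G Sᶜ ≤ η

/-- `S` is a connected `η`-treedepth deletion set of `G`. -/
def IsCTDS (G : SimpleGraph V) (η : ℕ) (S : Set V) : Prop :=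
  IsTDS G η S ∧ S.Nonempty ∧ (G.induce S).Connected

/-- A rooted forest with vertex set `A ⊆ V`, given by its (reflexive) ancestor relation:
`anc u v` means `u` is an ancestor of `v` (every vertex being an ancestor of itself). -/
structure RootedForest (V : Type*) (A : Set V) where
  anc : V → V → Prop
  mem_left : ∀ {u v}, anc u v → u ∈ A
  mem_right : ∀ {u v}, anc u v → v ∈ A
  refl : ∀ v ∈ A, anc v v
  trans : ∀ {u v w}, anc u v → anc v w → anc u w
  antisymm : ∀ {u v}, anc u v → anc v u → u = v
  chain : ∀ {u w v}, anc u v → anc w v → anc u w ∨ anc w u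

/-- Depth of a rooted forest: the maximum number of vertices on a root-to-leaf path,
i.e. the maximum number of ancestors of a vertex. -/
noncomputable def RootedForest.depth [Fintype V] {A : Set V} (F : RootedForest V A) : ℕ :=
  Finset.univ.sup fun v : V => {u | F.anc u v}.ncard

/-- `F` is a treedepth decomposition of `G[A]`: the endpoints of every edge of `G[A]`
are in ancestor-descendant relation in `F`. -/
def IsTDDecompOn (G : SimpleGraph V) (A : Set V) (F : RootedForest V A) : Prop :=
  ∀ u v, u ∈ A → v ∈ A → G.Adj u v → F.anc u v ∨ F.anc v u

/-- `A` is an `(x,y)`-vertex cut in `G`: `A` avoids `x` and `y` and there is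
no path from `x` to `y` in `G − A`. -/
def IsVertexCut (G : SimpleGraph V) (x y : V) (A : Set V) : Prop :=
  ∃ (hx : x ∈ Aᶜ) (hy : y ∈ Aᶜ), ¬ (G.induce Aᶜ).Reachable ⟨x, hx⟩ ⟨y, hy⟩

/-- The weight of a subgraph: the sum of the weights of its edges. -/
noncomputable def subWeight (w : Sym2 V → ℕ) {G : SimpleGraph V} (T : G.Subgraph) : ℕ :=
  ∑ᶠ e ∈ T.edgeSet, w e

/-- The leaves (vertices with exactly one neighbor) of a subgraph. -/
def subLeaves {G : SimpleGraph V} (T : G.Subgraph) : Set V :=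
  {v | (T.neighborSet v).ncard = 1}

/-- `T` is a Steiner tree for the terminal set `R` in `G`. -/
def IsSteinerTree (G : SimpleGraph V) (R : Set V) (T : G.Subgraph) : Prop :=
  T.coe.IsTree ∧ R ⊆ T.verts

/-- `T` is a `t`-component for `R`: a tree with at most `t` leaves, all of which lie in `R`. -/
def IsTComponent (G : SimpleGraph V) (R : Set V) (t : ℕ) (T : G.Subgraph) : Prop :=
  T.coe.IsTree ∧ (subLeaves T).ncard ≤ t ∧ subLeaves T ⊆ R

theorem tdLE_of_ncard [Finite V] (G : SimpleGraph V) (n : ℕ) :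
    ∀ S : Set V, S.ncard ≤ n → tdLE G n S := by
  induction n with
  | zero =>
    intro S h
    exact (Set.ncard_eq_zero (Set.toFinite S)).1 (Nat.le_zero.1 h)
  | succ n ih =>
    intro S h x hx
    refine ⟨x, ⟨hx, hx, Reachable.refl _⟩, ih _ ?_⟩
    have hsub : compIn G S x \ {x} ⊂ S := by
      refine ⟨?_, fun h' => (h' hx).2 rfl⟩
      rintro y ⟨⟨_, hy, _⟩, _⟩
      exact hy
    have := Set.ncard_lt_ncard hsub (Set.toFinite S)
    omega

theorem clique_le_of_tdLE [Finite V] (G : SimpleGraph V) (n : ℕ) :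
    ∀ S K : Set V, tdLE G n S → K ⊆ S → G.IsClique K → K.ncard ≤ n := by
  induction n with
  | zero =>
    intro S K h hK _
    have hS : S = ∅ := h
    rw [hS] at hK
    simp [Set.subset_empty_iff.1 hK]
  | succ n ih =>
    intro S K h hK hc
    rcases K.eq_empty_or_nonempty with rfl | ⟨x, hx⟩
    · simp
    obtain ⟨v, _, hv⟩ := h x (hK hx)
    have hsub : K \ {v} ⊆ compIn G S x \ {v} := by
      rintro y ⟨hy, hyv⟩
      refine ⟨⟨hK hx, hK hy, ?_⟩, hyv⟩
      by_cases hxy : x = y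
      · subst hxy
        exact Reachable.refl _
      · have : (G.induce S).Adj ⟨x, hK hx⟩ ⟨y, hK hy⟩ := hc hx hy hxy
        exact this.reachable
    have h1 := ih _ _ hv hsub (hc.subset Set.diff_subset)
    have h2 := Set.ncard_le_ncard_diff_add_ncard K {v} (Set.toFinite _)
    rw [Set.ncard_singleton] at h2
    omega

theorem stmt6_part1 [Finite V] (η : ℕ) (G : SimpleGraph V)
    (J : Set V) (hclique : G.IsClique J) (hcard : J.ncard = η + 1)
    (S : Set V) (hS : IsTDS G η S) : (S ∩ J).Nonempty := by
  by_contra hne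
  have hmem : tdLE G (td G Sᶜ) Sᶜ :=
    Nat.sInf_mem (s := {n | tdLE G n Sᶜ}) ⟨_, tdLE_of_ncard G _ Sᶜ le_rfl⟩
  have hJ : J ⊆ Sᶜ := fun y hy hyS => hne ⟨y, hyS, hy⟩
  have h1 := clique_le_of_tdLE G _ _ _ hmem hJ hclique
  have h2 : td G Sᶜ ≤ η := hS
  omega

/-- if `J` is a clique of size `η + 1` in `G` and `u ∈ J` is such that no
vertex of `J ∖ {u}` has a neighbor outside `J`, then (i) every `η`-treedepth deletion set
meets `J`, and (ii) every connected `η`-treedepth deletion set not contained in `J`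
contains `u`. -/
theorem stmt6 {V : Type*} [Fintype V] (η : ℕ) (hη : 1 ≤ η) (G : SimpleGraph V)
    (J : Set V) (hclique : G.IsClique J) (hcard : J.ncard = η + 1)
    (u : V) (hu : u ∈ J) (hpriv : ∀ w ∈ J \ {u}, ∀ x, G.Adj w x → x ∈ J) :
    (∀ S, IsTDS G η S → (S ∩ J).Nonempty) ∧
    (∀ S, IsCTDS G η S → ¬ S ⊆ J → u ∈ S) := by
  refine ⟨fun S hS => stmt6_part1 η G J hclique hcard S hS, ?_⟩
  rintro S ⟨hS, _, hconn⟩ hnot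
  by_contra huS
  obtain ⟨a, haS, haJ⟩ := stmt6_part1 η G J hclique hcard S hS
  apply hnot
  intro b hbS
  obtain ⟨p⟩ := hconn.preconnected ⟨a, haS⟩ ⟨b, hbS⟩
  have key : ∀ (x y : S), (G.induce S).Walk x y → (x : V) ∈ J → (y : V) ∈ J := by
    intro x y p
    induction p with
    | nil => exact id
    | cons hadj _ ih =>
      intro hx
      exact ih (hpriv _ ⟨hx, fun h => huS (h ▸ Subtype.coe_prop _)⟩ _ hadj)
  exact key _ _ p haJ
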